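/- Let (X, ω) be a 2n-dimensional closed symplectic manifold. Then for every r,s ∈ ℕ with 2r+s ≤ n, one has H^{(r,s)}_ω(X;ℝ) = L^r H^{(0,s)}_ω(X;ℝ); more precisely, H^{(r,s)}_ω(X;ℝ) = { [ω^r] ⌣ [β] : β a d-closed primitive s-form }, where ⌣ denotes the cup product on de Rham cohomology. -/

import Mathlib

open Submodule

noncomputable section

/-- An algebraic model of the de Rham complex of a closed (compact, without boundary)
smooth manifold `X` of dimension `2 * n` endowed with a symplectic structure `ω`
(a non-degenerate `d`-closed `2`-form): `M` is the space of (inhomogeneous) real smooth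
differential forms, `Ω k` the subspace of `k`-forms, `d` the exterior differential,
`wedge` the wedge product, `ω` the symplectic form (so that `wedge ω` is the Lefschetz
operator `L`), `Λ = -ι_{ω⁻¹}` the dual Lefschetz operator, and `integral` the integration
of top-degree forms over the closed manifold `X`. -/
structure ClosedSymplecticManifold (n : ℕ) where
  M : Type*
  [acg : AddCommGroup M]
  [mod : Module ℝ M]
  Ω : ℤ → Submodule ℝ M
  Ω_neg : ∀ k : ℤ, k < 0 → Ω k = ⊥
  Ω_top : ∀ k : ℤ, 2 * (n : ℤ) < k → Ω k = ⊥
  Ω_internal : DirectSum.IsInternal Ω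
  d : M →ₗ[ℝ] M
  d_mem : ∀ (k : ℤ), ∀ α ∈ Ω k, d α ∈ Ω (k + 1)
  d_d : ∀ α, d (d α) = 0
  wedge : M →ₗ[ℝ] M →ₗ[ℝ] M
  wedge_mem : ∀ (k l : ℤ), ∀ α ∈ Ω k, ∀ β ∈ Ω l, wedge α β ∈ Ω (k + l)
  wedge_assoc : ∀ α β γ, wedge (wedge α β) γ = wedge α (wedge β γ)
  one : M
  one_mem : one ∈ Ω 0
  one_wedge : ∀ α, wedge one α = α
  wedge_comm : ∀ (k l : ℤ), ∀ α ∈ Ω k, ∀ β ∈ Ω l,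
      wedge α β = ((-1 : ℝ) ^ (k * l)) • wedge β α
  leibniz : ∀ (k : ℤ), ∀ α ∈ Ω k, ∀ β,
      d (wedge α β) = wedge (d α) β + ((-1 : ℝ) ^ k) • wedge α (d β)
  ω : M
  ω_mem : ω ∈ Ω 2
  dω : d ω = 0
  /-- non-degeneracy of `ω`: `L^k : Ω^{n-k} → Ω^{n+k}` is injective … -/
  lefschetz_inj : ∀ k : ℕ, k ≤ n → ∀ α ∈ Ω ((n : ℤ) - k), (wedge ω ^ k) α = 0 → α = 0
  /-- … and surjective. -/
  lefschetz_surj : ∀ k : ℕ, k ≤ n → ∀ β ∈ Ω ((n : ℤ) + k),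
      ∃ α ∈ Ω ((n : ℤ) - k), (wedge ω ^ k) α = β
  Λ : M →ₗ[ℝ] M
  Λ_mem : ∀ (k : ℤ), ∀ α ∈ Ω k, Λ α ∈ Ω (k - 2)
  /-- the `𝔰𝔩(2;ℝ)`-commutation relation `[Λ, L] = (n - k)·id` on `k`-forms -/
  sl2 : ∀ (k : ℤ), ∀ α ∈ Ω k, Λ (wedge ω α) - wedge ω (Λ α) = ((n : ℤ) - k) • α
  /-- a `k`-form `β` is primitive iff `Λ β = 0` iff `L^{n-k+1} β = 0` -/
  primitive_iff : ∀ k : ℕ, k ≤ n → ∀ α ∈ Ω (k : ℤ),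
      (Λ α = 0 ↔ (wedge ω ^ (n - k + 1)) α = 0)
  integral : M →ₗ[ℝ] ℝ
  integral_ne_top : ∀ (k : ℤ), k ≠ 2 * (n : ℤ) → ∀ α ∈ Ω k, integral α = 0
  /-- Stokes' theorem on the closed manifold `X` -/
  stokes : ∀ α, integral (d α) = 0
  /-- positivity of the symplectic volume: for a function `f ≠ 0`, `∫_X f·f·ωⁿ > 0` -/
  volume_pos : ∀ f ∈ Ω 0, f ≠ 0 → 0 < integral (wedge f (wedge f ((wedge ω ^ n) one)))
  /-- Poincaré duality: non-degeneracy of the intersection pairing on cohomology -/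
  poincare_duality : ∀ (k : ℤ), ∀ α ∈ Ω k, d α = 0 →
      (∀ β ∈ Ω (2 * (n : ℤ) - k), d β = 0 → integral (wedge α β) = 0) →
      α ∈ (Ω (k - 1)).map d

attribute [instance] ClosedSymplecticManifold.acg ClosedSymplecticManifold.mod

namespace ClosedSymplecticManifold

variable {n : ℕ} (S : ClosedSymplecticManifold n)

/-- the Lefschetz operator `L = ω ∧ ·` -/
def L : S.M →ₗ[ℝ] S.M := S.wedge S.ω

/-- closed `k`-forms -/
def Zc (k : ℤ) : Submodule ℝ S.M := S.Ω k ⊓ LinearMap.ker S.d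

/-- exact `k`-forms -/
def Bc (k : ℤ) : Submodule ℝ S.M := (S.Ω (k - 1)).map S.d

/-- the de Rham cohomology group `H^k_{dR}(X; ℝ)` -/
abbrev Hc (k : ℤ) := ↥(S.Zc k) ⧸ (S.Bc k).comap (S.Zc k).subtype

/-- the de Rham cohomology class of a closed `k`-form -/
abbrev cls (k : ℤ) (a : S.Zc k) : S.Hc k := Submodule.Quotient.mk a

/-- the subgroup `H^{(r, k-2r)}_ω(X; ℝ) ⊆ H^k_{dR}(X;ℝ)` of classes admitting a representative
`L^r β` with `β` a primitive `(k - 2r)`-form -/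
def Hsub (k : ℤ) (r : ℕ) : Submodule ℝ (S.Hc k) :=
  ((((S.Ω (k - 2 * r) ⊓ LinearMap.ker S.Λ).map (S.L ^ r)).comap (S.Zc k).subtype)).map
    ((S.Bc k).comap (S.Zc k).subtype).mkQ

end ClosedSymplecticManifold

namespace ClosedSymplecticManifold

variable {n : ℕ} (S : ClosedSymplecticManifold n)

/-- `L^r H^{(0, k-2r)}_ω(X;ℝ) ⊆ H^k_dR(X;ℝ)`: the image of `H^{(0, k-2r)}_ω(X;ℝ)` under cup
product with `[ω]^r`, i.e. the classes `[ω^r] ⌣ [β] = [L^r β]` with `β` a `d`-closed primitive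
`(k-2r)`-form. -/
def LrH0 (k : ℤ) (r : ℕ) : Submodule ℝ (S.Hc k) :=
  ((((S.Ω (k - 2 * r) ⊓ LinearMap.ker S.Λ ⊓ LinearMap.ker S.d).map (S.L ^ r)).comap
      (S.Zc k).subtype)).map ((S.Bc k).comap (S.Zc k).subtype).mkQ

end ClosedSymplecticManifold

namespace ClosedSymplecticManifold

variable {n : ℕ} (S : ClosedSymplecticManifold n)

theorem d_L (α : S.M) : S.d (S.L α) = S.L (S.d α) := by
  have leibniz_ω := S.leibniz 2 S.ω S.ω_mem α
  simpa only [L, S.dω, map_zero, LinearMap.zero_apply, zero_add, even_two.neg_zpow, one_zpow,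
    one_smul] using leibniz_ω

theorem commute_d_L : Commute S.d S.L :=
  LinearMap.ext S.d_L

theorem d_L_pow (r : ℕ) (α : S.M) : S.d ((S.L ^ r) α) = (S.L ^ r) (S.d α) :=
  LinearMap.congr_fun (S.commute_d_L.pow_right r) α

theorem L_pow_eq_zero_iff {j : ℤ} {r : ℕ} (hjr : j + r ≤ n) {α : S.M} (hα : α ∈ S.Ω j) :
    (S.L ^ r) α = 0 ↔ α = 0 := by
  refine ⟨fun hL => ?_, fun h => by rw [h, map_zero]⟩
  rcases lt_or_ge j 0 with hj | hj
  · rwa [S.Ω_neg j hj, Submodule.mem_bot] at hα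
  -- `L ^ r` is the first factor of the Lefschetz isomorphism `L ^ (m + r)` on `Ω j`.
  obtain ⟨m, hm⟩ : ∃ m : ℕ, j = n - (m + r : ℕ) := ⟨(n - j - r).toNat, by lia⟩
  have hL_lefschetz : (S.L ^ (m + r)) α = 0 := by
    rw [pow_add, Module.End.mul_apply, hL, map_zero]
  exact S.lefschetz_inj (m + r) (by lia) α (hm ▸ hα) hL_lefschetz

theorem d_L_pow_eq_zero_iff {j : ℤ} {r : ℕ} (hjr : r = 0 ∨ j + r < n) {α : S.M}
    (hα : α ∈ S.Ω j) : S.d ((S.L ^ r) α) = 0 ↔ S.d α = 0 := by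
  rcases hjr with rfl | hjr
  · rw [pow_zero, Module.End.one_apply]
  · rw [d_L_pow, S.L_pow_eq_zero_iff (by lia) (S.d_mem j α hα)]

theorem LrH0_le_Hsub (k : ℤ) (r : ℕ) : S.LrH0 k r ≤ S.Hsub k r :=
  Submodule.map_mono (Submodule.comap_mono (Submodule.map_mono inf_le_left))

end ClosedSymplecticManifold

theorem Hsub_eq_LrH0_general {n : ℕ} (S : ClosedSymplecticManifold n) (k : ℤ) (r : ℕ)
    (hkr : r = 0 ∨ k < n + r) : S.Hsub k r = S.LrH0 k r := by
  refine le_antisymm (Submodule.map_mono ?_) (S.LrH0_le_Hsub k r)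
  rintro ⟨_, -, hclosed⟩ ⟨β, ⟨hβ, hprimitive⟩, rfl⟩
  have hdβ : S.d β = 0 :=
    (S.d_L_pow_eq_zero_iff (hkr.imp_right fun hk => by lia) hβ).mp hclosed
  exact ⟨β, ⟨⟨hβ, hprimitive⟩, hdβ⟩, rfl⟩

/-- **Proposition.** Let `X` be a `2n`-dimensional closed manifold endowed with a symplectic
structure `ω`. Then, for every `r, s ∈ ℕ` such that `2r + s ≤ n`, one has
`H^{(r,s)}_ω(X;ℝ) = L^r H^{(0,s)}_ω(X;ℝ)`; more precisely, `H^{(r,s)}_ω(X;ℝ)` consists of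
the classes `[ω^r] ⌣ [β]` with `β` a `d`-closed primitive `s`-form. -/
theorem Hsub_eq_LrH0 {n : ℕ} (S : ClosedSymplecticManifold n) (r s : ℕ)
    (h : 2 * r + s ≤ n) :
    S.Hsub (2 * r + s) r = S.LrH0 (2 * r + s) r :=
  Hsub_eq_LrH0_general S (2 * r + s) r (by lia)

end
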